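/- Let (X, μ) be a probability space with a measure-preserving ℤ²-action, and let f ∈ L^∞(X) be an integer-valued function with Ann(f) ≠ {0}. Then there exists a finite set Δ ⊆ ℤ² ∖ {0} such that: (1) no two elements of Δ are proportional to each other; (2) the function f₀ = f − Σ_{g∈Δ} f^g is periodic; and (3) for every l ≥ 1 and every g ∈ Δ, the function f^{lg} − f^g is periodic. -/

import Mathlib

open MeasureTheory

/-- The action of a Laurent polynomial `p = Σ c_g u^g ∈ ℤ[u₁^±, u₂^±]` on a function
`f : X → ℝ`, relative to a `ℤ²`-action `T` on `X` : `(p · f)(x) = Σ c_g f(g⁻¹ · x)`. -/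
noncomputable def polyAct {X : Type*} (T : ℤ × ℤ → X → X)
    (p : AddMonoidAlgebra ℤ (ℤ × ℤ)) (f : X → ℝ) : X → ℝ :=
  fun x => Finsupp.sum p.coeff fun g c => (c : ℝ) * f (T (-g) x)

/-- The σ-algebra of measurable sets invariant under a map `S : X → X`. -/
def invSigma {X : Type*} [MeasurableSpace X] (S : X → X) : MeasurableSpace X where
  MeasurableSet' A := MeasurableSet A ∧ S ⁻¹' A = A
  measurableSet_empty := ⟨MeasurableSet.empty, by simp⟩
  measurableSet_compl A hA := ⟨hA.1.compl, by rw [Set.preimage_compl, hA.2]⟩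
  measurableSet_iUnion A hA := ⟨MeasurableSet.iUnion fun i => (hA i).1, by
    rw [Set.preimage_iUnion]; exact Set.iUnion_congr fun i => (hA i).2⟩

/-- `f^g` : the projection of `f` onto the space of `T g`-invariant functions,
realized as the conditional expectation with respect to the invariant σ-algebra. -/
noncomputable def invProj {X : Type*} [MeasurableSpace X] (μ : Measure X)
    (T : ℤ × ℤ → X → X) (f : X → ℝ) (g : ℤ × ℤ) : X → ℝ :=
  μ[f | invSigma (T g)]

/-- A function `f` is periodic if `f(g⁻¹ · x) = f(x)` μ-a.e. for every `g` in some
finite index subgroup `Λ ⊆ ℤ²`. -/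
def PeriodicFun {X : Type*} [MeasurableSpace X] (μ : Measure X)
    (T : ℤ × ℤ → X → X) (f : X → ℝ) : Prop :=
  ∃ Λ : AddSubgroup (ℤ × ℤ), Λ.FiniteIndex ∧
    ∀ g ∈ Λ, (fun x => f (T (-g) x)) =ᵐ[μ] f

/-- Two elements `g, h ∈ ℤ²` are proportional if `a • g = b • h` for some nonzero
integers `a, b`. -/
def Proportional (g h : ℤ × ℤ) : Prop :=
  ∃ a b : ℤ, a ≠ 0 ∧ b ≠ 0 ∧ a • g = b • h


abbrev ZZ := ℤ × ℤ

/-- shifts acting on `ZZ → ℤ` -/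
noncomputable def shiftHom : Multiplicative ZZ →* Module.End ℤ (ZZ → ℤ) where
  toFun g := LinearMap.funLeft ℤ ℤ (fun h => g.toAdd + h)
  map_one' := by ext; simp [LinearMap.funLeft]
  map_mul' a b := by
    ext F h
    simp [LinearMap.funLeft, add_assoc, add_left_comm]

noncomputable def latAct : AddMonoidAlgebra ℤ ZZ →ₐ[ℤ] Module.End ℤ (ZZ → ℤ) :=
  AddMonoidAlgebra.lift ℤ (Module.End ℤ (ZZ → ℤ)) ZZ shiftHom

noncomputable def dil (n : ℕ) (p : AddMonoidAlgebra ℤ ZZ) : AddMonoidAlgebra ℤ ZZ :=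
  AddMonoidAlgebra.mapDomain (fun g => n • g) p

theorem latAct_single (g : ZZ) (c : ℤ) (F : ZZ → ℤ) (h : ZZ) :
    latAct (AddMonoidAlgebra.single g c) F h = c * F (g + h) := by
  simp [latAct, AddMonoidAlgebra.lift_single, shiftHom, LinearMap.funLeft]

theorem latAct_dil (n : ℕ) (p : AddMonoidAlgebra ℤ ZZ) (F : ZZ → ℤ) (h : ZZ) :
    latAct (dil n p) F h = p.coeff.sum fun g c => c * F (n • g + h) := by
  induction p using AddMonoidAlgebra.induction_linear with
  | zero => simp [dil]
  | add p q hp hq =>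
    rw [AddMonoidAlgebra.coeff_add, Finsupp.sum_add_index' (by simp) (by intros; ring), ← hp, ← hq]
    simp [dil, AddMonoidAlgebra.mapDomain_add]
  | single g c =>
    rw [dil, AddMonoidAlgebra.mapDomain_single, latAct_single]
    simp

theorem dil_dil (m n : ℕ) (p : AddMonoidAlgebra ℤ ZZ) : dil m (dil n p) = dil (m * n) p := by
  induction p using AddMonoidAlgebra.induction_linear with
  | zero => simp [dil]
  | add p q hp hq => simp_all [dil, AddMonoidAlgebra.mapDomain_add]
  | single g c => simp [dil, AddMonoidAlgebra.mapDomain_single, mul_assoc]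

theorem dil_one (p : AddMonoidAlgebra ℤ ZZ) : dil 1 p = p := by
  induction p using AddMonoidAlgebra.induction_linear with
  | zero => simp [dil]
  | add p q hp hq => simp_all [dil, AddMonoidAlgebra.mapDomain_add]
  | single g c => simp [dil, AddMonoidAlgebra.mapDomain_single]

theorem pow_prime_eq (q : ℕ) (hq : q.Prime) (p : AddMonoidAlgebra ℤ ZZ) :
    ∃ r, p ^ q = dil q p + (q : ℤ) • r := by
  induction p using AddMonoidAlgebra.induction_linear with
  | zero => exact ⟨0, by simp [dil, hq.ne_zero]⟩
  | add a b ha hb =>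
    obtain ⟨r, hr⟩ := ha
    obtain ⟨s, hs⟩ := hb
    obtain ⟨t, ht⟩ := exists_add_pow_prime_eq hq a b
    refine ⟨r + s + a * b * t, ?_⟩
    have : dil q (a + b) = dil q a + dil q b := by simp [dil, AddMonoidAlgebra.mapDomain_add]
    rw [ht, hr, hs, this]
    simp only [zsmul_eq_mul]
    push_cast
    ring
  | single g c =>
    have := Fact.mk hq
    have : (q : ℤ) ∣ c ^ q - c := by
      rw [← ZMod.intCast_zmod_eq_zero_iff_dvd]
      simp
    obtain ⟨d, hd⟩ := this
    refine ⟨AddMonoidAlgebra.single (q • g) d, ?_⟩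
    rw [dil, AddMonoidAlgebra.mapDomain_single, AddMonoidAlgebra.single_pow,
      AddMonoidAlgebra.smul_single, ← AddMonoidAlgebra.single_add]
    congr 1
    simp only [smul_eq_mul]
    linarith

theorem dilation (p : AddMonoidAlgebra ℤ ZZ) (F : ZZ → ℤ) (B : ℕ) (hB : ∀ g, |F g| ≤ B)
    (h0 : latAct p F = 0) (Q : ℕ) (hQ : (p.coeff.sum fun _ c => |c|) * B ≤ Q) (n : ℕ) (hn0 : n ≠ 0)
    (hn : ∀ q, q.Prime → q ∣ n → Q < q) : latAct (dil n p) F = 0 := by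
  induction n using induction_on_primes with
  | zero => exact absurd rfl hn0
  | one => rwa [dil_one]
  | prime_mul q n hq ih =>
    have ih' := ih (by rintro rfl; simp at hn0) (fun q' h1 h2 => hn q' h1 (h2.mul_left q))
    obtain ⟨r, hr⟩ := pow_prime_eq q hq (dil n p)
    rw [dil_dil] at hr
    have e : latAct (dil (q * n) p) F = - ((q : ℤ) • latAct r F) := by
      have h1 : latAct (dil n p ^ q) F = 0 := by
        obtain ⟨k, rfl⟩ := Nat.exists_eq_succ_of_ne_zero hq.ne_zero
        rw [pow_succ, map_mul, Module.End.mul_apply, ih', map_zero]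
      rw [hr, map_add, map_smul] at h1
      exact eq_neg_of_add_eq_zero_left h1
    ext h
    refine Int.eq_zero_of_abs_lt_dvd (m := (q : ℤ)) ?_ ?_
    · rw [e]; simp
    · have hlt : (Q : ℤ) < q := by exact_mod_cast hn q hq (dvd_mul_right _ _)
      refine lt_of_le_of_lt ?_ hlt
      refine le_trans ?_ hQ
      rw [latAct_dil, Finsupp.sum, Finsupp.sum, Finset.sum_mul]
      refine (Finset.abs_sum_le_sum_abs _ _).trans (Finset.sum_le_sum fun g _ => ?_)
      rw [abs_mul]
      exact mul_le_mul_of_nonneg_left (hB _) (abs_nonneg _)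

section Meas

set_option linter.unusedSectionVars false

variable {X : Type*} [MeasurableSpace X] {μ : Measure X} [IsProbabilityMeasure μ]
    {T : ℤ × ℤ → X → X}

/-- invariance a.e. under `g` -/
def InvAE (μ : Measure X) (T : ℤ × ℤ → X → X) (φ : X → ℝ) (g : ℤ × ℤ) : Prop :=
  (fun x => φ (T (-g) x)) =ᵐ[μ] φ

theorem InvAE.congr (hmp : ∀ g, MeasurePreserving (T g) μ μ) {φ ψ : X → ℝ} {g : ℤ × ℤ}
    (h : InvAE μ T φ g) (e : φ =ᵐ[μ] ψ) : InvAE μ T ψ g := by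
  have e' := (hmp (-g)).quasiMeasurePreserving.ae_eq_comp e
  exact (e'.symm.trans h).trans e

def stab (μ : Measure X) (T : ℤ × ℤ → X → X) (hmp : ∀ g, MeasurePreserving (T g) μ μ)
    (hT0 : T 0 = id) (hTadd : ∀ g h : ℤ × ℤ, T (g + h) = T g ∘ T h) (φ : X → ℝ) :
    AddSubgroup (ℤ × ℤ) where
  carrier := {g | InvAE μ T φ g}
  zero_mem' := by simp [InvAE, hT0]
  add_mem' := by
    intro a b ha hb
    have e := (hmp (-b)).quasiMeasurePreserving.ae_eq_comp ha
    simp only [Set.mem_ofPred_eq, InvAE] at *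
    have : ∀ x, T (-(a + b)) x = T (-a) (T (-b) x) := by
      intro x; rw [neg_add, hTadd]; rfl
    simp only [this]
    exact e.trans hb
  neg_mem' := by
    intro a ha
    have e := (hmp a).quasiMeasurePreserving.ae_eq_comp ha
    simp only [Set.mem_ofPred_eq, InvAE, neg_neg] at *
    refine e.symm.trans (Filter.Eventually.of_forall fun x => ?_)
    change φ (T (-a) (T a x)) = φ x
    have : T (-a) (T a x) = (T (-a) ∘ T a) x := rfl
    rw [this, ← hTadd]; simp [hT0]

theorem finIdx_of_nonprop (Λ : AddSubgroup (ℤ × ℤ)) (g h : ℤ × ℤ) (hg : g ∈ Λ) (hh : h ∈ Λ)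
    (hg0 : g ≠ 0) (hh0 : h ≠ 0) (hn : ¬ Proportional g h) : Λ.FiniteIndex := by
  obtain ⟨a, b⟩ := g
  obtain ⟨c, d⟩ := h
  have hD : a * d - b * c ≠ 0 := by
    intro hD
    apply hn
    by_cases ha : a = 0
    · subst ha
      have hb : b ≠ 0 := by rintro rfl; exact hg0 rfl
      have hc : c = 0 := by
        have : b * c = 0 := by linarith
        exact (mul_eq_zero.1 this).resolve_left hb
      subst hc
      have hd : d ≠ 0 := by rintro rfl; exact hh0 rfl
      exact ⟨d, b, hd, hb, by ext <;> simp [mul_comm]⟩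
    · have hc : c ≠ 0 := by
        rintro rfl
        have : a * d = 0 := by linarith
        have hd := (mul_eq_zero.1 this).resolve_left ha
        subst hd
        exact hh0 rfl
      refine ⟨c, a, hc, ha, ?_⟩
      ext
      · simp [mul_comm]
      · simp; linarith
  set D := a * d - b * c with hDdef
  have hle : (AddSubgroup.zmultiples D).prod (AddSubgroup.zmultiples D) ≤ Λ := by
    rintro ⟨x, y⟩ hxy
    obtain ⟨⟨m, hm⟩, ⟨n, hn⟩⟩ := hxy
    simp only [smul_eq_mul] at hm hn
    have : ((x, y) : ℤ × ℤ) = (m * d - n * c) • (a, b) + (n * a - m * b) • (c, d) := by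
      ext
      · simp [← hm, hDdef]; ring
      · simp [← hn, hDdef]; ring
    rw [this]
    exact Λ.add_mem (Λ.zsmul_mem hg _) (Λ.zsmul_mem hh _)
  have : ((AddSubgroup.zmultiples D).prod (AddSubgroup.zmultiples D)).FiniteIndex := by
    constructor
    rw [AddSubgroup.index_prod, Int.index_zmultiples]
    simpa using hD
  exact AddSubgroup.finiteIndex_of_le hle

theorem PeriodicFun.add {φ ψ : X → ℝ} (h1 : PeriodicFun μ T φ) (h2 : PeriodicFun μ T ψ) :
    PeriodicFun μ T (φ + ψ) := by
  obtain ⟨A, hA, hA'⟩ := h1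
  obtain ⟨B, hB, hB'⟩ := h2
  exact ⟨A ⊓ B, inferInstance, fun g hg => (hA' g hg.1).add (hB' g hg.2)⟩

theorem PeriodicFun.neg {φ : X → ℝ} (h1 : PeriodicFun μ T φ) : PeriodicFun μ T (-φ) := by
  obtain ⟨A, hA, hA'⟩ := h1
  exact ⟨A, hA, fun g hg => (hA' g hg).neg⟩

theorem PeriodicFun.zero : PeriodicFun μ T (0 : X → ℝ) :=
  ⟨⊤, inferInstance, fun _ _ => Filter.EventuallyEq.rfl⟩

theorem PeriodicFun.sum {ι : Type*} (s : Finset ι) (φ : ι → X → ℝ)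
    (h : ∀ i ∈ s, PeriodicFun μ T (φ i)) : PeriodicFun μ T (∑ i ∈ s, φ i) := by
  classical
  induction s using Finset.induction_on with
  | empty => simpa using PeriodicFun.zero
  | insert i s hi ih =>
    rw [Finset.sum_insert hi]
    exact (h i (by simp)).add (ih fun j hj => h j (by simp [hj]))

theorem PeriodicFun.congr (hmp : ∀ g, MeasurePreserving (T g) μ μ) {φ ψ : X → ℝ}
    (h : PeriodicFun μ T φ) (e : φ =ᵐ[μ] ψ) : PeriodicFun μ T ψ := by
  obtain ⟨A, hA, hA'⟩ := h
  exact ⟨A, hA, fun g hg => InvAE.congr hmp (hA' g hg) e⟩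

theorem invSigma_le (S : X → X) : invSigma S ≤ (inferInstance : MeasurableSpace X) :=
  fun _ h => h.1

theorem invariant_of_measurable {S : X → X} {φ : X → ℝ} (h : Measurable[invSigma S] φ) (x : X) :
    φ (S x) = φ x := by
  have h2 := (h (measurableSet_singleton (φ x))).2
  have : x ∈ S ⁻¹' (φ ⁻¹' {φ x}) := by rw [h2]; simp
  simpa using this

theorem measurable_invSigma {S : X → X} {φ : X → ℝ} (h : Measurable φ) (hS : ∀ x, φ (S x) = φ x) :
    Measurable[invSigma S] φ := by
  intro A hA
  refine ⟨h hA, ?_⟩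
  ext x
  simp [hS]

/-- `E_g φ` is `g`-invariant. -/
theorem invProj_inv (hT0 : T 0 = id) (hTadd : ∀ g h : ℤ × ℤ, T (g + h) = T g ∘ T h)
    (φ : X → ℝ) (g : ℤ × ℤ) : InvAE μ T (invProj μ T φ g) g := by
  refine Filter.Eventually.of_forall fun x => ?_
  have hm : Measurable[invSigma (T g)] (invProj μ T φ g) :=
    (stronglyMeasurable_condExp (μ := μ) (f := φ) (m := invSigma (T g))).measurable
  have := invariant_of_measurable hm (T (-g) x)
  beta_reduce
  rw [← this]
  have : T g (T (-g) x) = (T g ∘ T (-g)) x := rfl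
  rw [this, ← hTadd]; simp [hT0]

/-- `E_g φ = φ` for `g`-invariant `φ`. -/
theorem invProj_of_inv (hmp : ∀ g, MeasurePreserving (T g) μ μ)
    (hT0 : T 0 = id) (hTadd : ∀ g h : ℤ × ℤ, T (g + h) = T g ∘ T h)
    {φ : X → ℝ} (hφ : Measurable φ) (hi : Integrable φ μ) {g : ℤ × ℤ} (h : InvAE μ T φ g) :
    invProj μ T φ g =ᵐ[μ] φ := by
  have hg : -g ∈ stab μ T hmp hT0 hTadd φ := neg_mem (show g ∈ stab μ T hmp hT0 hTadd φ from h)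
  have hn : ∀ n : ℕ, (fun x => φ ((T g)^[n] x)) =ᵐ[μ] φ := by
    intro n
    induction n with
    | zero => simp
    | succ n ih =>
      have e := (hmp g).quasiMeasurePreserving.ae_eq_comp ih
      have h2 : InvAE μ T φ (-g) := hg
      simp only [InvAE, neg_neg] at h2
      simp only [Function.iterate_succ, Function.comp_def] at *
      exact e.trans h2
  set ψ : X → ℝ := fun x => Filter.limsup (fun n : ℕ => φ ((T g)^[n] x)) Filter.atTop with hψ
  have hψm : Measurable ψ := Measurable.limsup fun n => hφ.comp ((hmp g).measurable.iterate n)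
  have hψi : ∀ x, ψ (T g x) = ψ x := by
    intro x
    have := Filter.limsup_nat_add (fun n : ℕ => φ ((T g)^[n] x)) 1
    simpa [hψ, Function.iterate_succ] using this
  have hae : φ =ᵐ[μ] ψ := by
    filter_upwards [ae_all_iff.2 hn] with x hx
    simp only [hψ, hx]
    simp
  have hsm : StronglyMeasurable[invSigma (T g)] ψ :=
    (measurable_invSigma hψm hψi).stronglyMeasurable
  have h1 : invProj μ T φ g =ᵐ[μ] μ[ψ | invSigma (T g)] := condExp_congr_ae hae
  have h2 : μ[ψ | invSigma (T g)] = ψ :=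
    condExp_of_stronglyMeasurable (invSigma_le _) hsm (hi.congr hae)
  rw [h2] at h1
  exact h1.trans hae.symm

theorem invProj_comm (hmp : ∀ g, MeasurePreserving (T g) μ μ)
    (hT0 : T 0 = id) (hTadd : ∀ g h : ℤ × ℤ, T (g + h) = T g ∘ T h)
    {φ : X → ℝ} (hi : Integrable φ μ) {g h : ℤ × ℤ}
    (hh : InvAE μ T φ h) : InvAE μ T (invProj μ T φ g) h := by
  have hcomm : ∀ a b x, T a (T b x) = T b (T a x) := by
    intro a b x
    change (T a ∘ T b) x = (T b ∘ T a) x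
    rw [← hTadd, ← hTadd, add_comm]
  have hinv : ∀ a x, T (-a) (T a x) = x := by
    intro a x
    change (T (-a) ∘ T a) x = x
    rw [← hTadd]; simp [hT0]
  have hinv' : ∀ a x, T a (T (-a) x) = x := by
    intro a x
    rw [hcomm, hinv]
  have hm : Measurable[invSigma (T g)] (invProj μ T φ g) :=
    (stronglyMeasurable_condExp (μ := μ) (f := φ) (m := invSigma (T g))).measurable
  have hm' : Measurable (invProj μ T φ g) := hm.mono (invSigma_le _) le_rfl
  have hIntg : Integrable (invProj μ T φ g) μ := integrable_condExp
  refine ae_eq_condExp_of_forall_setIntegral_eq (invSigma_le (T g)) hi ?_ ?_ ?_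
  · intro s _ _
    exact (((hmp (-h)).integrable_comp hIntg.aestronglyMeasurable).2 hIntg).integrableOn
  · intro s hs _
    have hemb : MeasurableEmbedding (T (-h)) := by
      let e : X ≃ᵐ X :=
        { toFun := T (-h), invFun := T h, left_inv := hinv' h, right_inv := hinv h,
          measurable_toFun := (hmp _).measurable, measurable_invFun := (hmp _).measurable }
      exact e.measurableEmbedding
    set s' := T h ⁻¹' s with hs'
    have hss : s = T (-h) ⁻¹' s' := by
      ext x; simp [hs', hinv']
    have hs'm : MeasurableSet[invSigma (T g)] s' := by
      refine ⟨(hmp h).measurable hs.1, ?_⟩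
      ext x
      have h2 := Set.ext_iff.1 hs.2 (T h x)
      simp only [Set.mem_preimage, hs'] at *
      rw [hcomm, h2]
    have e1 : ∫ x in s, invProj μ T φ g (T (-h) x) ∂μ = ∫ x in s', invProj μ T φ g x ∂μ := by
      rw [hss]
      exact (hmp (-h)).setIntegral_preimage_emb hemb _ _
    have e2 : ∫ x in s, φ (T (-h) x) ∂μ = ∫ x in s', φ x ∂μ := by
      rw [hss]
      exact (hmp (-h)).setIntegral_preimage_emb hemb _ _
    rw [e1, invProj, setIntegral_condExp (invSigma_le _) hi hs'm, ← e2]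
    exact integral_congr_ae (ae_restrict_of_ae hh)
  · refine (measurable_invSigma (hm'.comp (hmp (-h)).measurable) fun x => ?_).stronglyMeasurable.aestronglyMeasurable
    simp only [Function.comp]
    rw [hcomm]
    exact invariant_of_measurable hm _

/-- The endgame: a decomposition into invariant functions along nonproportional directions. -/
theorem final_of_decomp (hmp : ∀ g, MeasurePreserving (T g) μ μ)
    (hT0 : T 0 = id) (hTadd : ∀ g h : ℤ × ℤ, T (g + h) = T g ∘ T h)
    (f : X → ℝ) (Δ : Finset (ℤ × ℤ)) (φ : ℤ × ℤ → X → ℝ)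
    (h0 : ∀ g ∈ Δ, g ≠ (0 : ℤ × ℤ))
    (hnp : ∀ g ∈ Δ, ∀ h ∈ Δ, g ≠ h → ¬ Proportional g h)
    (hφm : ∀ g ∈ Δ, Measurable (φ g)) (hφi : ∀ g ∈ Δ, Integrable (φ g) μ)
    (hφ : ∀ g ∈ Δ, InvAE μ T (φ g) g)
    (hf : f =ᵐ[μ] ∑ g ∈ Δ, φ g) :
    PeriodicFun μ T (f - ∑ g ∈ Δ, invProj μ T f g) ∧
      ∀ l : ℕ, 1 ≤ l → ∀ g ∈ Δ,
        PeriodicFun μ T (invProj μ T f (l • g) - invProj μ T f g) := by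
  classical
  have key : ∀ l : ℕ, 1 ≤ l → ∀ g ∈ Δ, PeriodicFun μ T (invProj μ T f (l • g) - φ g) := by
    intro l hl g hg
    have e1 : invProj μ T f (l • g) =ᵐ[μ] ∑ h ∈ Δ, invProj μ T (φ h) (l • g) :=
      (condExp_congr_ae hf).trans (condExp_finsetSum hφi _)
    have e2 : invProj μ T (φ g) (l • g) =ᵐ[μ] φ g := by
      refine invProj_of_inv hmp hT0 hTadd (hφm g hg) (hφi g hg) ?_
      exact (stab μ T hmp hT0 hTadd (φ g)).nsmul_mem (hφ g hg) l
    have hp : PeriodicFun μ T (∑ h ∈ Δ.erase g, invProj μ T (φ h) (l • g)) := by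
      refine PeriodicFun.sum _ _ fun h hh => ?_
      have hhΔ := Finset.mem_of_mem_erase hh
      refine ⟨stab μ T hmp hT0 hTadd (invProj μ T (φ h) (l • g)), ?_, fun _ h => h⟩
      refine finIdx_of_nonprop _ (l • g) h (invProj_inv hT0 hTadd _ _)
        (invProj_comm hmp hT0 hTadd (hφi h hhΔ) (hφ h hhΔ)) ?_ (h0 h hhΔ) ?_
      · exact smul_ne_zero (by omega) (h0 g hg)
      · rintro ⟨a, b, ha, hb, hab⟩
        refine hnp g hg h hhΔ (Finset.ne_of_mem_erase hh).symm ⟨a * l, b, ?_, hb, ?_⟩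
        · exact mul_ne_zero ha (by omega)
        · rw [mul_smul, ← hab, natCast_zsmul]
    refine hp.congr hmp ?_
    rw [← Finset.add_sum_erase _ _ hg] at e1
    filter_upwards [e1, e2] with x h1 h2
    simp only [Pi.add_apply, Pi.sub_apply] at *
    rw [h1, h2]; ring
  have key1 : ∀ g ∈ Δ, PeriodicFun μ T (invProj μ T f g - φ g) := by
    intro g hg
    simpa using key 1 le_rfl g hg
  constructor
  · refine (PeriodicFun.sum Δ _ key1).neg.congr hmp ?_
    filter_upwards [hf] with x hx
    simp only [Pi.neg_apply, Pi.sub_apply, Finset.sum_apply, Finset.sum_sub_distrib] at *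
    rw [hx]; ring
  · intro l hl g hg
    have := (key l hl g hg).add (key1 g hg).neg
    convert this using 1
    abel

theorem Proportional.symm {g h : ℤ × ℤ} (H : Proportional g h) : Proportional h g := by
  obtain ⟨a, b, ha, hb, e⟩ := H
  exact ⟨b, a, hb, ha, e.symm⟩

theorem Proportional.trans {g h k : ℤ × ℤ} (H : Proportional g h) (K : Proportional h k) :
    Proportional g k := by
  obtain ⟨a, b, ha, hb, e⟩ := H
  obtain ⟨c, d, hc, hd, e'⟩ := K
  refine ⟨c * a, b * d, mul_ne_zero hc ha, mul_ne_zero hb hd, ?_⟩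
  rw [mul_smul, e, mul_smul, ← e', smul_smul, smul_smul, mul_comm]

def propSetoid : Setoid (ℤ × ℤ) where
  r := Proportional
  iseqv := ⟨fun _ => ⟨1, 1, one_ne_zero, one_ne_zero, rfl⟩, Proportional.symm, Proportional.trans⟩

/-- canonical representative of the proportionality class -/
noncomputable def rep (g : ℤ × ℤ) : ℤ × ℤ := (Quotient.mk propSetoid g).out

theorem rep_prop (g : ℤ × ℤ) : Proportional (rep g) g := Quotient.mk_out (s := propSetoid) g

theorem rep_eq {g h : ℤ × ℤ} (H : Proportional g h) : rep g = rep h := by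
  unfold rep
  rw [Quotient.sound (s := propSetoid) H]

theorem grouping (hmp : ∀ g, MeasurePreserving (T g) μ μ)
    (hT0 : T 0 = id) (hTadd : ∀ g h : ℤ × ℤ, T (g + h) = T g ∘ T h)
    {ι : Type*} (S : Finset ι) (v : ι → ℤ × ℤ) (hv : ∀ i ∈ S, v i ≠ 0) (φ : ι → X → ℝ)
    (hφm : ∀ i ∈ S, Measurable (φ i)) (hφi : ∀ i ∈ S, Integrable (φ i) μ)
    (hφ : ∀ i ∈ S, InvAE μ T (φ i) (v i)) :
    ∃ (Δ : Finset (ℤ × ℤ)) (ψ : ℤ × ℤ → X → ℝ),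
    (∀ g ∈ Δ, g ≠ (0 : ℤ × ℤ)) ∧
    (∀ g ∈ Δ, ∀ h ∈ Δ, g ≠ h → ¬ Proportional g h) ∧
    (∀ g ∈ Δ, Measurable (ψ g)) ∧ (∀ g ∈ Δ, Integrable (ψ g) μ) ∧
    (∀ g ∈ Δ, InvAE μ T (ψ g) g) ∧ ∑ i ∈ S, φ i = ∑ g ∈ Δ, ψ g := by
  classical
  choose a b ha hb hab using fun i => rep_prop (v i)
  set M : ℤ := ∏ i ∈ S, a i with hM
  have hM0 : M ≠ 0 := Finset.prod_ne_zero_iff.2 fun i _ => ha i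
  set w : ι → ℤ × ℤ := fun i => M • rep (v i) with hw
  have hwp : ∀ i, Proportional (w i) (v i) := by
    intro i
    refine ⟨a i, M * b i, ha i, mul_ne_zero hM0 (hb i), ?_⟩
    rw [hw, mul_smul, ← hab, smul_smul, smul_smul, mul_comm]
  refine ⟨S.image w, fun g => ∑ i ∈ S with w i = g, φ i, ?_, ?_, ?_, ?_, ?_, ?_⟩
  · intro g hg
    obtain ⟨i, hi, rfl⟩ := Finset.mem_image.1 hg
    intro h0
    obtain ⟨c, d, hc, hd, e⟩ := hwp i
    rw [h0, smul_zero] at e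
    exact (smul_ne_zero hd (hv i hi)) e.symm
  · intro g hg h hh hgh hp
    obtain ⟨i, hi, rfl⟩ := Finset.mem_image.1 hg
    obtain ⟨j, hj, rfl⟩ := Finset.mem_image.1 hh
    apply hgh
    have := rep_eq (((hwp i).symm.trans hp).trans (hwp j))
    simp only [hw, this]
  · intro g _
    change Measurable (∑ i ∈ S with w i = g, φ i)
    have e : (∑ i ∈ S with w i = g, φ i) = fun x => ∑ i ∈ S with w i = g, φ i x := by
      ext x; simp
    rw [e]
    refine Finset.measurable_sum _ fun i hi => ?_
    exact hφm i (Finset.mem_filter.1 hi).1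
  · intro g _
    refine integrable_finsetSum' _ fun i hi => ?_
    exact hφi i (Finset.mem_filter.1 hi).1
  · intro g _
    have h1 : ∀ i ∈ S.filter (fun i => w i = g), InvAE μ T (φ i) g := by
      intro i hi
      obtain ⟨hiS, rfl⟩ := Finset.mem_filter.1 hi
      have hdvd : a i ∣ M := Finset.dvd_prod_of_mem _ hiS
      obtain ⟨m, hm⟩ := hdvd
      have : w i = (m * b i) • v i := by
        simp only [hw]
        rw [hm, mul_smul m, ← hab, smul_smul, mul_comm]
      rw [this]
      exact (stab μ T hmp hT0 hTadd (φ i)).zsmul_mem (hφ i hiS) _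
    unfold InvAE
    have h2 : ∀ᵐ x ∂μ, ∀ i ∈ S.filter (fun i => w i = g), φ i (T (-g) x) = φ i x :=
      (Finset.eventually_all _).2 h1
    filter_upwards [h2] with x hx
    simp only [Finset.sum_apply]
    exact Finset.sum_congr rfl hx
  · exact (Finset.sum_fiberwise_of_maps_to (fun i hi => Finset.mem_image_of_mem w hi) φ).symm

/-- Koopman operators -/
noncomputable def koop (hmp : ∀ g, MeasurePreserving (T g) μ μ) (g : ℤ × ℤ) :
    Lp ℝ 2 μ →ₗᵢ[ℝ] Lp ℝ 2 μ :=
  Lp.compMeasurePreservingₗᵢ ℝ (T (-g)) (hmp (-g))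

theorem koop_coe (hmp : ∀ g, MeasurePreserving (T g) μ μ) (g : ℤ × ℤ) (y : Lp ℝ 2 μ) :
    koop hmp g y =ᵐ[μ] fun x => y (T (-g) x) :=
  Lp.coeFn_compMeasurePreserving y (hmp (-g))

theorem koop_add (hmp : ∀ g, MeasurePreserving (T g) μ μ)
    (hTadd : ∀ g h : ℤ × ℤ, T (g + h) = T g ∘ T h) (g h : ℤ × ℤ) (y : Lp ℝ 2 μ) :
    koop hmp (g + h) y = koop hmp g (koop hmp h y) := by
  apply Lp.ext
  have e := (hmp (-g)).quasiMeasurePreserving.ae_eq_comp (koop_coe hmp h y)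
  refine (koop_coe hmp _ y).trans (Filter.EventuallyEq.trans ?_ (koop_coe hmp g _).symm)
  refine Filter.EventuallyEq.trans ?_ e.symm
  rw [neg_add, add_comm, hTadd]
  rfl

theorem koop_zero (hmp : ∀ g, MeasurePreserving (T g) μ μ)
    (hT0 : T 0 = id) (y : Lp ℝ 2 μ) : koop hmp 0 y = y := by
  apply Lp.ext
  refine (koop_coe hmp _ y).trans ?_
  simp [hT0]

theorem koop_iterate (hmp : ∀ g, MeasurePreserving (T g) μ μ)
    (hT0 : T 0 = id) (hTadd : ∀ g h : ℤ × ℤ, T (g + h) = T g ∘ T h) (g : ℤ × ℤ) (k : ℕ)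
    (y : Lp ℝ 2 μ) : (koop hmp g)^[k] y = koop hmp (k • g) y := by
  induction k with
  | zero => simp [koop_zero hmp hT0]
  | succ k ih => rw [Function.iterate_succ_apply', ih, ← koop_add hmp hTadd, succ_nsmul']

theorem ergodic_limit (hmp : ∀ g, MeasurePreserving (T g) μ μ) (g : ℤ × ℤ) (y : Lp ℝ 2 μ) :
    ∃ z : Lp ℝ 2 μ, koop hmp g z = z ∧
      Filter.Tendsto (birkhoffAverage ℝ (koop hmp g) _root_.id · y) Filter.atTop (nhds z) := by
  have h := (koop hmp g).toContinuousLinearMap.tendsto_birkhoffAverage_orthogonalProjection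
    (koop hmp g).norm_toContinuousLinearMap_le y
  refine ⟨_, ?_, h⟩
  exact Subtype.property (Submodule.orthogonalProjectionOnto
    ((koop hmp g).toContinuousLinearMap.eqLocus (1 : Lp ℝ 2 μ →L[ℝ] Lp ℝ 2 μ)) y)

theorem decomp (hmp : ∀ g, MeasurePreserving (T g) μ μ)
    (hT0 : T 0 = id) (hTadd : ∀ g h : ℤ × ℤ, T (g + h) = T g ∘ T h)
    (y : Lp ℝ 2 μ) (S : Finset (ℤ × ℤ)) (c : ℤ × ℤ → ℝ) (g0 : ℤ × ℤ) (hg0 : g0 ∈ S)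
    (hc : c g0 ≠ 0) (N : ℕ)
    (H : ∀ k : ℕ, ∑ g ∈ S, c g • koop hmp ((1 + k * N) • (g - g0)) y = 0) :
    ∃ φ : ℤ × ℤ → Lp ℝ 2 μ, (∀ g, koop hmp (N • (g - g0)) (φ g) = φ g) ∧
      y = ∑ g ∈ S.erase g0, φ g := by
  choose z hz hlim using fun g : ℤ × ℤ => ergodic_limit hmp (N • (g - g0)) y
  have hav : ∀ K : ℕ, ∑ g ∈ S, c g • koop hmp (g - g0)
      (birkhoffAverage ℝ (koop hmp (N • (g - g0))) _root_.id K y) = 0 := by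
    intro K
    have : ∀ g ∈ S, c g • koop hmp (g - g0)
      (birkhoffAverage ℝ (koop hmp (N • (g - g0))) _root_.id K y) =
      (K : ℝ)⁻¹ • ∑ k ∈ Finset.range K, c g • koop hmp ((1 + k * N) • (g - g0)) y := by
      intro g _
      rw [birkhoffAverage, birkhoffSum, map_smul, map_sum, smul_comm, Finset.smul_sum]
      congr 1
      refine Finset.sum_congr rfl fun k _ => ?_
      rw [id, koop_iterate hmp hT0 hTadd, ← koop_add hmp hTadd, add_smul, one_smul, mul_smul]
    rw [Finset.sum_congr rfl this, ← Finset.smul_sum, Finset.sum_comm,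
      Finset.sum_eq_zero fun k _ => H k, smul_zero]
  have hsum : ∑ g ∈ S, c g • koop hmp (g - g0) (z g) = 0 := by
    have h1 : Filter.Tendsto (fun K : ℕ => ∑ g ∈ S, c g • koop hmp (g - g0)
      (birkhoffAverage ℝ (koop hmp (N • (g - g0))) _root_.id K y)) Filter.atTop
        (nhds (∑ g ∈ S, c g • koop hmp (g - g0) (z g))) :=
      tendsto_finsetSum _ fun g _ =>
        (((koop hmp (g - g0)).continuous.tendsto _).comp (hlim g)).const_smul (c g)
    simp only [hav] at h1
    exact tendsto_nhds_unique h1 tendsto_const_nhds |>.symm ▸ rfl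
  have hz0 : z g0 = y := by
    have h1 := hlim g0
    have h2 : Function.IsFixedPt (koop hmp (N • (g0 - g0))) y := by
      simp [Function.IsFixedPt, koop_zero hmp hT0]
    exact tendsto_nhds_unique h1 (h2.tendsto_birkhoffAverage ℝ _root_.id)
  refine ⟨fun g => (-(c g0)⁻¹ * c g) • koop hmp (g - g0) (z g), fun g => ?_, ?_⟩
  · rw [map_smul, ← koop_add hmp hTadd, add_comm, koop_add hmp hTadd, hz]
  · rw [← Finset.add_sum_erase _ _ hg0, sub_self, koop_zero hmp hT0, hz0] at hsum
    simp only [mul_smul]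
    rw [← Finset.smul_sum, eq_neg_of_add_eq_zero_right hsum, neg_smul, smul_neg, neg_neg, smul_smul,
      inv_mul_cancel₀ hc, one_smul]

end Meas

/-- **Theorem 3.3 (spectral decomposition).** Let `(X, μ)` be a probability space with
a measure-preserving `ℤ²`-action and let `f ∈ L^∞(X)` be integer-valued with
`Ann(f) ≠ {0}`. Then there is a finite set `Δ ⊆ ℤ² ∖ {0}` such that: no two elements
of `Δ` are proportional; `f₀ = f − Σ_{g∈Δ} f^g` is periodic; and `f^{l·g} − f^g` is
periodic for every `l ≥ 1` and `g ∈ Δ`. -/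
theorem spectral_decomposition
    {X : Type*} [MeasurableSpace X] (μ : Measure X) [IsProbabilityMeasure μ]
    (T : ℤ × ℤ → X → X)
    (hmp : ∀ g, MeasurePreserving (T g) μ μ)
    (hT0 : T 0 = id)
    (hTadd : ∀ g h : ℤ × ℤ, T (g + h) = T g ∘ T h)
    (f : X → ℝ) (hfmeas : Measurable f)
    (hfbdd : MemLp f ⊤ μ)
    (hfint : ∀ᵐ x ∂μ, ∃ k : ℤ, f x = (k : ℝ))
    (hann : ∃ p : AddMonoidAlgebra ℤ (ℤ × ℤ), p ≠ 0 ∧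
      polyAct T p f =ᵐ[μ] (fun _ => (0 : ℝ))) :
    ∃ Δ : Finset (ℤ × ℤ),
      (∀ g ∈ Δ, g ≠ (0 : ℤ × ℤ)) ∧
      (∀ g ∈ Δ, ∀ h ∈ Δ, g ≠ h → ¬ Proportional g h) ∧
      PeriodicFun μ T (f - ∑ g ∈ Δ, invProj μ T f g) ∧
      ∀ l : ℕ, 1 ≤ l → ∀ g ∈ Δ,
        PeriodicFun μ T (invProj μ T f (l • g) - invProj μ T f g) := by
  obtain ⟨p, hp, hpf⟩ := hann
  obtain ⟨B, hB⟩ : ∃ B : ℕ, ∀ᵐ x ∂μ, |f x| ≤ B := by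
    have h1 := hfbdd.eLpNorm_lt_top
    rw [eLpNorm_exponent_top] at h1
    obtain ⟨B, hB⟩ := exists_nat_ge (eLpNormEssSup f μ).toReal
    refine ⟨B, ?_⟩
    filter_upwards [ae_le_eLpNormEssSup (f := f) (μ := μ)] with x hx
    have h2 := ENNReal.toReal_mono h1.ne hx
    rw [toReal_enorm, Real.norm_eq_abs] at h2
    exact h2.trans hB
  have hg : ∃ g0, p.coeff g0 ≠ 0 := by
    by_contra! hcon
    apply hp
    ext g
    simpa using hcon g
  obtain ⟨g0, hg0⟩ := hg
  obtain ⟨Q, hQ⟩ : ∃ Q : ℕ, (p.coeff.sum fun _ c => |c|) * B ≤ (Q : ℤ) :=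
    ⟨((p.coeff.sum fun _ c => |c|) * B).toNat, Int.self_le_toNat _⟩
  set N := Q.factorial with hN
  -- the dilation lemma along almost every orbit
  have hae : ∀ᵐ x ∂μ, ∀ k : ℕ,
      ∑ g ∈ p.coeff.support, (p.coeff g : ℝ) * f (T (-((1 + k * N) • (g - g0))) x) = 0 := by
    have hall : ∀ᵐ x ∂μ, ∀ g : ℤ × ℤ, (∃ k : ℤ, f (T (-g) x) = (k : ℝ)) ∧
        |f (T (-g) x)| ≤ B ∧ polyAct T p f (T (-g) x) = 0 := by
      rw [ae_all_iff]
      intro g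
      exact (hmp (-g)).quasiMeasurePreserving.ae (hfint.and (hB.and hpf))
    filter_upwards [hall] with x hx k
    choose F hF using fun g => (hx g).1
    have hFB : ∀ g, |F g| ≤ B := by
      intro g
      have := (hx g).2.1
      rw [hF g] at this
      exact_mod_cast this
    have h0 : latAct p F = 0 := by
      ext h
      rw [← dil_one p, latAct_dil]
      have := (hx h).2.2
      rw [polyAct] at this
      have e : ∀ g, f (T (-g) (T (-h) x)) = F (1 • g + h) := by
        intro g
        rw [← hF, one_smul, neg_add, hTadd]; rfl
      simp only [e] at this
      simp only [Finsupp.sum] at this ⊢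
      exact_mod_cast this
    have hd := dilation p F B hFB h0 Q hQ (1 + k * N) (by omega) (by
      intro q hq hqd
      by_contra! hle
      have h1 : q ∣ k * N := (Nat.dvd_factorial hq.pos hle).mul_left k
      exact hq.one_lt.ne' (Nat.dvd_one.1 ((Nat.dvd_add_left h1).1 hqd)))
    have hd' := congrFun hd (-((1 + k * N) • g0))
    rw [latAct_dil] at hd'
    simp only [hF]
    simp only [Finsupp.sum, ← sub_eq_add_neg, ← smul_sub] at hd'
    exact_mod_cast hd'
  have hf2 : MemLp f 2 μ := hfbdd.mono_exponent le_top
  obtain ⟨φ, hφ, hsum⟩ := decomp hmp hT0 hTadd (hf2.toLp f) p.coeff.support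
    (fun g => (p.coeff g : ℝ)) g0 (by simpa using hg0) (by exact_mod_cast hg0) N (by
      intro k
      apply Lp.ext
      refine (Lp.coeFn_finsetSum _ _).trans ?_
      have h1 : ∀ᵐ x ∂μ, ∀ g ∈ p.coeff.support,
          ((p.coeff g : ℝ) • koop hmp ((1 + k * N) • (g - g0)) (hf2.toLp f) : Lp ℝ 2 μ) x =
          (p.coeff g : ℝ) * f (T (-((1 + k * N) • (g - g0))) x) := by
        refine (Finset.eventually_all _).2 fun g _ => ?_
        have e := (hmp (-((1 + k * N) • (g - g0)))).quasiMeasurePreserving.ae_eq_comp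
          hf2.coeFn_toLp
        filter_upwards [Lp.coeFn_smul (p.coeff g : ℝ)
          (koop hmp ((1 + k * N) • (g - g0)) (hf2.toLp f)),
          koop_coe hmp ((1 + k * N) • (g - g0)) (hf2.toLp f), e] with x h1 h2 h3
        rw [h1, Pi.smul_apply, h2, smul_eq_mul]
        simp only [Function.comp] at h3
        rw [h3]
      filter_upwards [h1, hae, Lp.coeFn_zero ℝ 2 μ] with x h1 h2 h3
      rw [h3, Finset.sum_apply, Finset.sum_congr rfl h1]
      exact h2 k)
  have hN0 : N ≠ 0 := Nat.factorial_ne_zero Q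
  obtain ⟨Δ, ψ, h1, h2, h3, h4, h5, h6⟩ := grouping hmp hT0 hTadd (p.coeff.support.erase g0)
    (fun g => N • (g - g0))
    (fun g hg => smul_ne_zero hN0 (sub_ne_zero.2 (Finset.ne_of_mem_erase hg)))
    (fun g => (φ g : X → ℝ)) (fun g _ => (Lp.stronglyMeasurable (φ g)).measurable)
    (fun g _ => (Lp.memLp (φ g)).integrable one_le_two)
    (fun g _ => by
      have := koop_coe hmp (N • (g - g0)) (φ g)
      rw [hφ g] at this
      exact this.symm)
  have hfe : f =ᵐ[μ] ∑ g ∈ Δ, ψ g := by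
    rw [← h6]
    refine hf2.coeFn_toLp.symm.trans ?_
    rw [hsum]
    exact Lp.coeFn_finsetSum _ _
  exact ⟨Δ, h1, h2, final_of_decomp hmp hT0 hTadd f Δ ψ h1 h2 h3 h4 h5 hfe⟩
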